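/- arXiv:2003.01830 — 2 statements merged into one kernel-verified Lean document; each statement's English description precedes it below -/
import Mathlib

section
/- If s is a proper cluster of f with ρ_s < d_s, then no cluster s' ⊊ s is a rational cluster. -/
open Polynomial
open scoped Classical

namespace ClusterPicture

variable {K Kbar : Type*} [Field K] [Field Kbar] [Algebra K Kbar]

lemma zero_lt_top' : (0 : WithTop ℚ) < ⊤ := by
  simp

lemma withTop_add_pos {a b : WithTop ℚ} (ha : 0 ≤ a) (hb : 0 < b) : 0 < a + b := by
  rcases eq_or_ne a ⊤ with h | h
  · subst h; rw [top_add]; exact zero_lt_top'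
  · lift a to ℚ using h
    rcases eq_or_ne b ⊤ with h' | h'
    · subst h'; rw [add_top]; exact zero_lt_top'
    · lift b to ℚ using h'
      have ha' : (0 : ℚ) ≤ a := by exact_mod_cast ha
      have hb' : (0 : ℚ) < b := by exact_mod_cast hb
      exact_mod_cast add_pos_of_nonneg_of_pos ha' hb'

/-- The setting of the paper: `K` is a complete discretely valued field, with valuation `v`
normalised so that `v(K^×) = ℤ`, `Kbar` is an algebraic closure of `K`, and `v` is (the unique)
extension of the valuation to a `ℚ ∪ {∞}`-valued valuation on `Kbar`. -/
structure Setup (K Kbar : Type*) [Field K] [Field Kbar] [Algebra K Kbar] : Type _ where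
  /-- the valuation on the algebraic closure -/
  v : Kbar → WithTop ℚ
  v_top_iff : ∀ x : Kbar, v x = ⊤ ↔ x = 0
  v_one : v 1 = 0
  v_neg : ∀ x : Kbar, v (-x) = v x
  v_mul : ∀ x y : Kbar, v (x * y) = v x + v y
  v_add : ∀ x y : Kbar, min (v x) (v y) ≤ v (x + y)
  /-- the valuation is normalised: nonzero elements of `K` have integer valuation -/
  v_base_int : ∀ x : K, x ≠ 0 → ∃ n : ℤ, v (algebraMap K Kbar x) = ((n : ℚ) : WithTop ℚ)
  /-- the valuation is surjective onto `ℤ` on `K^×`: there is a uniformiser -/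
  exists_uniformiser : ∃ π : K, v (algebraMap K Kbar π) = ((1 : ℚ) : WithTop ℚ)
  /-- `Kbar` is an algebraic closure of `K` -/
  algClosed : IsAlgClosed Kbar
  algebraic : Algebra.IsAlgebraic K Kbar
  /-- `K` is complete with respect to the valuation -/
  complete : ∀ a : ℕ → K,
    (∀ q : ℚ, ∃ N : ℕ, ∀ m, N ≤ m → ∀ n, N ≤ n →
      ((q : ℚ) : WithTop ℚ) ≤ v (algebraMap K Kbar (a m - a n))) →
    ∃ b : K, ∀ q : ℚ, ∃ N : ℕ, ∀ n, N ≤ n →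
      ((q : ℚ) : WithTop ℚ) ≤ v (algebraMap K Kbar (a n - b))

/-- Valuation of an element of the base field `K`. -/
def Setup.vK (S : Setup K Kbar) (x : K) : WithTop ℚ := S.v (algebraMap K Kbar x)

/-- The finite set of roots of `f` in the algebraic closure `Kbar`. -/
noncomputable def rootFinset (f : K[X]) : Finset Kbar :=
  (f.map (algebraMap K Kbar)).roots.toFinset

/-- A cluster for `f`: a nonempty subset of the set of roots of `f` cut out by a `v`-adic disc. -/
def IsCluster (S : Setup K Kbar) (f : K[X]) (s : Finset Kbar) : Prop :=
  s.Nonempty ∧ ∃ (z : Kbar) (δ : ℚ),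
    s = (rootFinset f).filter fun r => ((δ : ℚ) : WithTop ℚ) ≤ S.v (r - z)

/-- The depth `d_s = min_{r,r' ∈ s} v (r - r')` of a cluster. -/
noncomputable def depth (S : Setup K Kbar) (s : Finset Kbar) : WithTop ℚ :=
  s.inf fun r => s.inf fun r' => S.v (r - r')

/-- `min_{r ∈ s} v (r - z)`, for `z ∈ Kbar`. -/
noncomputable def dmin (S : Setup K Kbar) (s : Finset Kbar) (z : Kbar) : WithTop ℚ :=
  s.inf fun r => S.v (r - z)

/-- `min_{r ∈ s} v (r - w)`, for `w ∈ K`. -/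
noncomputable def dminK (S : Setup K Kbar) (s : Finset Kbar) (w : K) : WithTop ℚ :=
  dmin S s (algebraMap K Kbar w)

/-- `w ∈ K` is a rational centre of `s` if it maximises `min_{r ∈ s} v (r - w)`.
For a proper cluster `s` with rational centre `w`, the radius `ρ_s` is `dminK S s w`. -/
def IsRationalCentre (S : Setup K Kbar) (s : Finset Kbar) (w : K) : Prop :=
  ∀ w' : K, dminK S s w' ≤ dminK S s w

/-- A rational cluster: a cluster cut out by a disc with centre in `K`. -/
def IsRationalCluster (S : Setup K Kbar) (f : K[X]) (s : Finset Kbar) : Prop :=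
  s.Nonempty ∧ ∃ (w : K) (δ : ℚ),
    s = (rootFinset f).filter fun r => ((δ : ℚ) : WithTop ℚ) ≤ S.v (r - algebraMap K Kbar w)

/-- A cluster centred at `w ∈ K`. -/
def IsClusterCentredAt (S : Setup K Kbar) (f : K[X]) (w : K) (s : Finset Kbar) : Prop :=
  s.Nonempty ∧ ∃ δ : ℚ,
    s = (rootFinset f).filter fun r => ((δ : ℚ) : WithTop ℚ) ≤ S.v (r - algebraMap K Kbar w)

/-- The cluster picture of `f` is almost rational: every proper cluster `s` with
`|s| > |ρ_s|_p` satisfies `d_s = ρ_s`. -/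
def AlmostRational (S : Setup K Kbar) (f : K[X]) (p : ℕ) : Prop :=
  ∀ s : Finset Kbar, IsCluster S f s → 1 < s.card →
    ∀ (w : K) (ρ : ℚ), IsRationalCentre S s w → dminK S s w = ((ρ : ℚ) : WithTop ℚ) →
      padicNorm p ρ < (s.card : ℚ) → depth S s = ((ρ : ℚ) : WithTop ℚ)

/-- The slope of the `j`-th edge of the polygon with vertices `(i_j, c_j)`. -/
def NPslope {s : ℕ} (i : Fin (s + 1) → ℕ) (c : Fin (s + 1) → ℚ) (j : Fin s) : ℚ :=
  (c j.succ - c j.castSucc) / ((i j.succ : ℚ) - (i j.castSucc : ℚ))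

/-- `(i_0, c_0), …, (i_s, c_s)` are the vertices of the Newton polygon of `f`:
the points `(i_j, c_j)` are among the points `(m, v(a_m))`, the first and last vertices lie
above the trailing and leading coefficients, the slopes of consecutive edges strictly
increase, and every point `(m, v(a_m))` lies on or above (the line spanned by) every edge. -/
structure IsNPVertices (S : Setup K Kbar) (f : K[X]) (s : ℕ)
    (i : Fin (s + 1) → ℕ) (c : Fin (s + 1) → ℚ) : Prop where
  mono : StrictMono i
  first : i 0 = f.natTrailingDegree
  last : i (Fin.last s) = f.natDegree
  vert : ∀ j, S.vK (f.coeff (i j)) = ((c j : ℚ) : WithTop ℚ)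
  slope_mono : StrictMono (NPslope i c)
  support : ∀ (j : Fin s) (m : ℕ) (q : ℚ), S.vK (f.coeff m) = ((q : ℚ) : WithTop ℚ) →
    (c j.succ - c j.castSucc) * ((m : ℚ) - (i j.castSucc : ℚ)) ≤
      (q - c j.castSucc) * ((i j.succ : ℚ) - (i j.castSucc : ℚ))

/-- The valuation ring of `Kbar`. -/
def intRing (S : Setup K Kbar) : Subring Kbar where
  carrier := {x : Kbar | (0 : WithTop ℚ) ≤ S.v x}
  zero_mem' := by
    simp only [Set.mem_setOf_eq, (S.v_top_iff 0).mpr rfl]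
    exact le_top
  one_mem' := by
    simp only [Set.mem_setOf_eq, S.v_one]
    exact le_refl _
  add_mem' := by
    intro a b ha hb
    exact le_trans (le_min ha hb) (S.v_add a b)
  mul_mem' := by
    intro a b ha hb
    simp only [Set.mem_setOf_eq, S.v_mul a b]
    exact add_nonneg ha hb
  neg_mem' := by
    intro a ha
    simpa only [Set.mem_setOf_eq, S.v_neg] using ha

lemma mem_intRing {S : Setup K Kbar} {x : Kbar} :
    x ∈ intRing S ↔ (0 : WithTop ℚ) ≤ S.v x := Iff.rfl

/-- The maximal ideal of the valuation ring of `Kbar`. -/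
def maxIdeal (S : Setup K Kbar) : Ideal (intRing S) where
  carrier := {x : intRing S | (0 : WithTop ℚ) < S.v (x : Kbar)}
  zero_mem' := by
    show (0 : WithTop ℚ) < S.v ((0 : intRing S) : Kbar)
    rw [show ((0 : intRing S) : Kbar) = 0 from rfl, (S.v_top_iff 0).mpr rfl]
    exact zero_lt_top'
  add_mem' := by
    intro a b ha hb
    show (0 : WithTop ℚ) < S.v ((a : Kbar) + (b : Kbar))
    exact lt_of_lt_of_le (lt_min ha hb) (S.v_add _ _)
  smul_mem' := by
    intro c x hx
    show (0 : WithTop ℚ) < S.v ((c : Kbar) * (x : Kbar))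
    rw [S.v_mul]
    exact withTop_add_pos c.2 hx

/-- The residue field of `Kbar`; it is an algebraic closure of the residue field `k` of `K`. -/
abbrev Residue (S : Setup K Kbar) : Type _ := intRing S ⧸ maxIdeal S

/-- Reduction to the residue field (with junk value `0` on non-integral elements). -/
noncomputable def red (S : Setup K Kbar) (x : Kbar) : Residue S :=
  if h : (0 : WithTop ℚ) ≤ S.v x then Ideal.Quotient.mk (maxIdeal S) ⟨x, mem_intRing.mpr h⟩
  else 0

/-- The reduction `f̄|_L` of `f` along the edge `L` of its Newton polygon with endpoints
`(i₁, q₁)` and `(i₂, q₂)`, of slope `ρ = nρ / n` where `n` is the denominator of `ρ`;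
`π` is a uniformiser of `K`.  This is the reduction of `π^{-q₁}·(f|_L)(π^{-nρ}·x)`, where
`f|_L (x) = ∑_j a_{n j + i₁} x^j`. -/
noncomputable def redEdge (S : Setup K Kbar) (π : K) (f : K[X])
    (i₁ i₂ : ℕ) (q₁ nρ : ℤ) (n : ℕ) : Polynomial (Residue S) :=
  ∑ j ∈ Finset.range ((i₂ - i₁) / n + 1),
    Polynomial.C (red S (algebraMap K Kbar (f.coeff (n * j + i₁)) *
      (algebraMap K Kbar π) ^ (-(q₁ + (j : ℤ) * nρ)))) * Polynomial.X ^ j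

/-- `f` is NP-regular (`Δ_v`-regular in dimension 1): for every edge `L` of its Newton
polygon, the reduction `f̄|_L` has no multiple roots in the algebraic closure of the residue
field, i.e. is separable. -/
def NPRegular (S : Setup K Kbar) (π : K) (f : K[X]) : Prop :=
  ∀ (s : ℕ) (i : Fin (s + 1) → ℕ) (c : Fin (s + 1) → ℚ),
    IsNPVertices S f s i c →
    ∀ (j : Fin s) (q₁ nρ : ℤ) (n : ℕ),
      (q₁ : ℚ) = c j.castSucc →
      n = (NPslope i c j).den →
      (nρ : ℚ) = (n : ℚ) * NPslope i c j →
      (redEdge S π f (i j.castSucc) (i j.succ) q₁ nρ n).Separable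

/-- The vertex-index function of the Newton polygon of `f(x+w)`, in terms of the sizes of
the clusters `s_1 ⊂ … ⊂ s_{n+1}` centred at `w`; here `t` is the prescribed first index. -/
def vertIdx {n : ℕ} (t : ℕ) (s : Fin (n + 1) → Finset Kbar) : Fin (n + 2) → ℕ :=
  fun j => Fin.cases (motive := fun _ => ℕ) t (fun j' => (s j').card) j

/-- The vertex-value function of the Newton polygon of `f(x+w)`: the vertex over `|s_j|` has
second coordinate `ε_{s_j} - |s_j|·ρ_{s_j}`; `c0` is the prescribed value at the first vertex. -/
def vertVal {n : ℕ} (c0 : ℚ) (s : Fin (n + 1) → Finset Kbar) (ρ ε : Fin (n + 1) → ℚ) :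
    Fin (n + 2) → ℚ :=
  fun j => Fin.cases (motive := fun _ => ℚ) c0 (fun j' => ε j' - ((s j').card : ℚ) * ρ j') j

/-! An ultrametric disc centred at `z` either contains `s` or misses it, as soon as `z` is farther
from some point of `s` than any two points of `s` are from each other: by the strong triangle
inequality all points of `s` are then equidistant from `z`. When `ρ_s < d_s`, every `z ∈ K` is
of this kind. -/

lemma inf_inf_le {α β : Type*} [SemilatticeInf β] [OrderTop β] (d : α → α → β)
    {s : Finset α} {a b : α} (ha : a ∈ s) (hb : b ∈ s) :
    (s.inf fun r => s.inf fun r' => d r r') ≤ d a b :=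
  (Finset.inf_le ha).trans (Finset.inf_le hb)

section Ultrametric

variable {G Γ : Type*} [AddGroup G] [LinearOrder Γ] {v : G → Γ}

lemma min_map_sub_le_map_sub (hv : ∀ x y, min (v x) (v y) ≤ v (x + y)) (x y z : G) :
    min (v (x - y)) (v (y - z)) ≤ v (x - z) := by
  simpa only [sub_add_sub_cancel] using hv (x - y) (y - z)

variable [OrderTop Γ]

lemma map_sub_eq_inf_of_inf_lt (hv : ∀ x y, min (v x) (v y) ≤ v (x + y))
    {s : Finset G} {z a : G}
    (hz : (s.inf fun r => v (r - z)) < s.inf fun r => s.inf fun r' => v (r - r'))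
    (ha : a ∈ s) : v (a - z) = s.inf fun r => v (r - z) := by
  refine le_antisymm ?_ (Finset.inf_le ha)
  have hmin : min (s.inf fun r => s.inf fun r' => v (r - r')) (v (a - z)) ≤
      s.inf fun r => v (r - z) :=
    Finset.le_inf fun b hb =>
      (min_le_min_right _ (inf_inf_le (fun r r' => v (r - r')) hb ha)).trans
        (min_map_sub_le_map_sub hv b a z)
  exact (min_le_iff.mp hmin).resolve_left hz.not_ge

theorem no_rational_subcluster_general (hv : ∀ x y, min (v x) (v y) ≤ v (x + y))
    {C : Set G} {R s : Finset G} (hsR : s ⊆ R)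
    (hlt : ∀ z ∈ C,
      (s.inf fun r => v (r - z)) < s.inf fun r => s.inf fun r' => v (r - r')) :
    ∀ s' : Finset G, s' ⊂ s →
      ¬ (s'.Nonempty ∧ ∃ z ∈ C, ∃ δ : Γ, s' = R.filter fun r => δ ≤ v (r - z)) := by
  rintro s' hss ⟨⟨a, ha⟩, z, hzC, δ, rfl⟩
  have equidistant : ∀ b ∈ s, v (a - z) = v (b - z) := fun b hb =>
    (map_sub_eq_inf_of_inf_lt hv (hlt z hzC) (hss.subset ha)).trans
      (map_sub_eq_inf_of_inf_lt hv (hlt z hzC) hb).symm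
  exact hss.not_subset fun b hb => Finset.mem_filter.mpr
    ⟨hsR hb, (Finset.mem_filter.mp ha).2.trans_eq (equidistant b hb)⟩

end Ultrametric

lemma IsCluster.subset_rootFinset {S : Setup K Kbar} {f : K[X]} {s : Finset Kbar}
    (hs : IsCluster S f s) : s ⊆ rootFinset f := by
  obtain ⟨-, z, δ, rfl⟩ := hs
  exact Finset.filter_subset _ _

/-- **No rational subclusters.** If `s` is a proper cluster with `ρ_s < d_s`, then no
`s' ⊊ s` is a rational cluster. -/
theorem no_rational_subcluster
    (S : Setup K Kbar) (f : K[X]) (hsep : f.Separable) (hdeg : 1 ≤ f.natDegree)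
    (s : Finset Kbar) (hs : IsCluster S f s) (hproper : 1 < s.card)
    (w : K) (hw : IsRationalCentre S s w)
    (hlt : dminK S s w < depth S s) :
    ∀ s' : Finset Kbar, s' ⊂ s → ¬ IsRationalCluster S f s' := by
  rintro s' hss ⟨hne, w', δ, hs'⟩
  exact no_rational_subcluster_general (C := Set.range (algebraMap K Kbar)) S.v_add
    hs.subset_rootFinset (Set.forall_mem_range.mpr fun u => (hw u).trans_lt hlt) s' hss
    ⟨hne, _, ⟨w', rfl⟩, _, hs'⟩

end ClusterPicture
end

section
/- Let s be a cluster of f and let s' ⊊ s be a rational cluster which is maximal among rational clusters properly contained in s. Then s' is a child of s, i.e. there is no cluster t with s' ⊊ t ⊊ s. Moreover, the parent of any rational cluster s' ≠ R (the smallest cluster strictly containing s') is itself a rational cluster. -/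
open Polynomial
open scoped Classical

namespace ClusterPicture

variable {K Kbar : Type*} [Field K] [Field Kbar] [Algebra K Kbar]

section Disc

variable {L Γ₀ : Type*} [Ring L] [LinearOrderedAddCommMonoidWithTop Γ₀] {v : AddValuation L Γ₀}
  {x z z' : L} {δ δ' : Γ₀}

/-- The closed disc of centre `z` and valuative radius `δ`; a larger `δ` gives a smaller disc. -/
def disc (v : AddValuation L Γ₀) (z : L) (δ : Γ₀) : Set L := {x | δ ≤ v (x - z)}

lemma mem_disc : x ∈ disc v z δ ↔ δ ≤ v (x - z) := Iff.rfl

lemma mem_disc_self : z ∈ disc v z δ := by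
  simp only [mem_disc, sub_self, v.map_zero, le_top]

lemma disc_antitone : Antitone (disc v z) := fun _ _ h _ hx => h.trans hx

lemma disc_eq_of_mem (h : x ∈ disc v z δ) : disc v x δ = disc v z δ := by
  ext y
  constructor
  · intro hy
    simpa only [mem_disc, sub_add_sub_cancel] using v.map_le_add hy h
  · intro hy
    simpa only [mem_disc, sub_sub_sub_cancel_right] using v.map_le_sub hy h

lemma disc_subset_disc_of_le (h : δ ≤ δ') (hx : x ∈ disc v z δ) (hx' : x ∈ disc v z' δ') :
    disc v z' δ' ⊆ disc v z δ := by
  rw [← disc_eq_of_mem hx, ← disc_eq_of_mem hx']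
  exact disc_antitone h

end Disc

section Cluster

variable {L Γ₀ : Type*} [Ring L] [LinearOrderedAddCommMonoidWithTop Γ₀] {v : AddValuation L Γ₀}
  {R C s t : Set L}

/-- `s` is a cluster of the point set `R` cut out by a disc with centre in `C`. With `R` the roots
of a polynomial over `K`, the clusters are the case `C = Set.univ` and the rational clusters the
case where `C` is the image of `K`. Only discs of finite radius are allowed. -/
def IsClusterCentredIn (v : AddValuation L Γ₀) (R C s : Set L) : Prop :=
  s.Nonempty ∧ ∃ z ∈ C, ∃ δ ≠ ⊤, s = R ∩ disc v z δ

/-- If `t ⊈ s`, the disc cutting out `t` cannot lie inside the one cutting out `s`. The two discs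
meet in `s`, so the disc of `t` contains that of `s`, and the centre of `s` is also a centre
for `t`. -/
lemma IsClusterCentredIn.of_ssubset (hs : IsClusterCentredIn v R C s)
    (ht : IsClusterCentredIn v R Set.univ t) (hst : s ⊂ t) : IsClusterCentredIn v R C t := by
  obtain ⟨⟨r, hr⟩, w, hw, ε, -, rfl⟩ := hs
  obtain ⟨ht_nonempty, z, -, δ, hδ, rfl⟩ := ht
  have hr_mem : r ∈ disc v z δ := (hst.subset hr).2
  have hδε : δ ≤ ε := by
    by_contra! hεδ
    exact hst.not_subset <| Set.inter_subset_inter_right R <|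
      disc_subset_disc_of_le hεδ.le hr.2 hr_mem
  have hw_mem : w ∈ disc v z δ :=
    disc_subset_disc_of_le hδε hr_mem hr.2 mem_disc_self
  exact ⟨ht_nonempty, w, hw, δ, hδ, by rw [disc_eq_of_mem hw_mem]⟩

theorem maximal_rational_subcluster_is_child_general
    (v : AddValuation L Γ₀) (R C : Set L) :
    (∀ s s' : Set L, IsClusterCentredIn v R C s' →
      (∀ t : Set L, IsClusterCentredIn v R C t → s' ⊂ t → ¬ t ⊂ s) →
      ¬ ∃ t : Set L, IsClusterCentredIn v R Set.univ t ∧ s' ⊂ t ∧ t ⊂ s) ∧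
    (∀ s' t : Set L, IsClusterCentredIn v R C s' → IsClusterCentredIn v R Set.univ t → s' ⊂ t →
      IsClusterCentredIn v R C t) :=
  ⟨fun _ _ hs' hmax ⟨t, ht, hs't, hts⟩ => hmax t (hs'.of_ssubset ht hs't) hs't hts,
    fun _ _ hs' ht hs't => hs'.of_ssubset ht hs't⟩

end Cluster

/-- `S.v` as a bundled additive valuation. -/
noncomputable def Setup.addValuation (S : Setup K Kbar) : AddValuation Kbar (WithTop ℚ) :=
  AddValuation.of S.v ((S.v_top_iff 0).mpr rfl) S.v_one S.v_add S.v_mul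

lemma isCluster_iff_isClusterCentredIn {S : Setup K Kbar} {f : K[X]} {s : Finset Kbar} :
    IsCluster S f s ↔
      IsClusterCentredIn S.addValuation (rootFinset f : Finset Kbar) Set.univ s := by
  simp only [IsCluster, IsClusterCentredIn, ← Finset.coe_inj, Finset.coe_filter,
    Finset.coe_nonempty, Set.mem_univ, true_and, WithTop.ne_top_iff_exists, exists_exists_eq_and]
  rfl

lemma isRationalCluster_iff_isClusterCentredIn {S : Setup K Kbar} {f : K[X]} {s : Finset Kbar} :
    IsRationalCluster S f s ↔
      IsClusterCentredIn S.addValuation (rootFinset f : Finset Kbar)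
        (Set.range (algebraMap K Kbar)) s := by
  simp only [IsRationalCluster, IsClusterCentredIn, ← Finset.coe_inj, Finset.coe_filter,
    Finset.coe_nonempty, Set.exists_range_iff, WithTop.ne_top_iff_exists, exists_exists_eq_and]
  rfl

/-- **Maximal rational subclusters are children; parents of rational clusters are rational.**
If `s' ⊊ s` is a rational cluster, maximal among rational clusters properly contained in the
cluster `s`, then `s'` is a child of `s` (no cluster lies strictly between them). Moreover the
parent of any rational cluster `s' ≠ R` (the smallest cluster strictly containing it) is a
rational cluster. -/
theorem maximal_rational_subcluster_is_child
    (S : Setup K Kbar) (f : K[X]) (hsep : f.Separable) (hdeg : 1 ≤ f.natDegree) :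
    (∀ s s' : Finset Kbar, IsCluster S f s → IsRationalCluster S f s' → s' ⊂ s →
      (∀ t : Finset Kbar, IsRationalCluster S f t → s' ⊂ t → ¬ t ⊂ s) →
      ¬ ∃ t : Finset Kbar, IsCluster S f t ∧ s' ⊂ t ∧ t ⊂ s) ∧
    (∀ s' t : Finset Kbar, IsRationalCluster S f s' → s' ≠ rootFinset f →
      IsCluster S f t → s' ⊂ t →
      (∀ u : Finset Kbar, IsCluster S f u → s' ⊂ u → t ⊆ u) →
      IsRationalCluster S f t) := by
  simp only [isCluster_iff_isClusterCentredIn, isRationalCluster_iff_isClusterCentredIn,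
    ← Finset.coe_ssubset]
  obtain ⟨child, parent⟩ := maximal_rational_subcluster_is_child_general
    S.addValuation (rootFinset f : Finset Kbar) (Set.range (algebraMap K Kbar))
  refine ⟨fun s s' _ hs' _ hmax ⟨t, ht, hs't, hts⟩ =>
    child s s' hs' (fun u hu hs'u hus => ?_) ⟨t, ht, hs't, hts⟩,
    fun s' t hs' _ ht hs't _ => parent s' t hs' ht hs't⟩
  lift u to Finset Kbar using s.finite_toSet.subset hus.subset
  exact hmax u hu hs'u hus

end ClusterPicture
end
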